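/- For general points, if 5d ≥ 20n + 6 and n ≥ 1, then ℓ(L(d, d−4, 6^n)) ≥ 5d − 20n − 6, with equality whenever n is odd or d ≠ 4n + 2. Since v(L(d, d−4, 6^n)) = 5d − 21n − 6, this system is special. -/

import Mathlib

open MvPolynomial

/-- The iterated partial derivative corresponding to the multi-index `ν`. -/
noncomputable def mderiv (ν : Fin 3 → ℕ) :
    MvPolynomial (Fin 3) ℂ →ₗ[ℂ] MvPolynomial (Fin 3) ℂ :=
  ((pderiv (R := ℂ) (0 : Fin 3)).toLinearMap ^ ν 0) ∘ₗ
  ((pderiv (R := ℂ) (1 : Fin 3)).toLinearMap ^ ν 1) ∘ₗ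
  ((pderiv (R := ℂ) (2 : Fin 3)).toLinearMap ^ ν 2)

/-- The linear system `L(d; m)` of homogeneous forms of degree `d` in three variables
all of whose partial derivatives of order `< m i` vanish at the point `p i`,
i.e. plane curves of degree `d` with multiplicity at least `m i` at `p i`. -/
noncomputable def linSys {k : ℕ} (p : Fin k → Fin 3 → ℂ) (d : ℕ) (m : Fin k → ℕ) :
    Submodule ℂ (MvPolynomial (Fin 3) ℂ) :=
  (homogeneousSubmodule (Fin 3) ℂ d) ⊓
    ⨅ (i : Fin k), ⨅ (ν : Fin 3 → ℕ), ⨅ (_ : ν 0 + ν 1 + ν 2 < m i),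
      LinearMap.ker ((aeval (p i)).toLinearMap ∘ₗ mderiv ν)

/-- The projective dimension `ℓ` of the linear system (`-1` means empty). -/
noncomputable def projDim {k : ℕ} (p : Fin k → Fin 3 → ℂ) (d : ℕ) (m : Fin k → ℕ) : ℤ :=
  (Module.finrank ℂ (linSys p d m) : ℤ) - 1

/-- The virtual dimension `v = d(d+3)/2 - ∑ mᵢ(mᵢ+1)/2`. -/
def virtDim {k : ℕ} (d : ℕ) (m : Fin k → ℕ) : ℤ :=
  ((d : ℤ) * (d + 3)) / 2 - ∑ i : Fin k, ((m i : ℤ) * (m i + 1)) / 2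

/-- The quasi-homogeneous multiplicity vector `(m₀, 6, …, 6)` on `n + 1` points. -/
def qh (n m0 : ℕ) : Fin (n + 1) → ℕ := fun i => if i = 0 then m0 else 6

/-- A property `Q` of configurations of `k` points of `ℙ²` (given by nonzero homogeneous
coordinate vectors) holds for points in general position: there is a nonzero polynomial
in the coordinates such that `Q` holds whenever it does not vanish. -/
def Generically (k : ℕ) (Q : (Fin k → Fin 3 → ℂ) → Prop) : Prop :=
  ∃ P : MvPolynomial (Fin k × Fin 3) ℂ, P ≠ 0 ∧
    ∀ p : Fin k → Fin 3 → ℂ, (∀ i, p i ≠ 0) →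
      eval (fun x => p x.1 x.2) P ≠ 0 → Q p

theorem mderiv_apply (ν : Fin 3 → ℕ) (F : MvPolynomial (Fin 3) ℂ) :
    mderiv ν F = (pderiv 0)^[ν 0] ((pderiv 1)^[ν 1] ((pderiv 2)^[ν 2] F)) := by
  simp only [mderiv, LinearMap.comp_apply, Module.End.pow_apply]
  rfl

theorem coeff_iterate_pderiv {σ R : Type*} [CommSemiring R] (i : σ) (k : ℕ)
    (F : MvPolynomial σ R) (μ : σ →₀ ℕ) :
    coeff μ ((pderiv i)^[k] F) =
      coeff (μ + Finsupp.single i k) F * ((μ i + 1).ascFactorial k : ℕ) := by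
  induction k generalizing F with
  | zero => simp
  | succ k ih =>
    rw [Function.iterate_succ_apply, ih, coeff_pderiv, add_assoc, ← Finsupp.single_add,
      Nat.ascFactorial_succ]
    simp only [Finsupp.add_apply, Finsupp.single_eq_same]
    push_cast
    ring

theorem finsupp_fin_three (ν : Fin 3 →₀ ℕ) :
    Finsupp.single 0 (ν 0) + Finsupp.single 1 (ν 1) + Finsupp.single 2 (ν 2) = ν := by
  ext i; fin_cases i <;> simp

theorem degree_fin_three (ν : Fin 3 →₀ ℕ) : ν.degree = ν 0 + ν 1 + ν 2 := by
  rw [Finsupp.degree_eq_sum, Fin.sum_univ_three]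

theorem constantCoeff_iterate_pderiv {R : Type*} [CommSemiring R] (ν : Fin 3 →₀ ℕ)
    (F : MvPolynomial (Fin 3) R) :
    constantCoeff ((pderiv 0)^[ν 0] ((pderiv 1)^[ν 1] ((pderiv 2)^[ν 2] F))) =
      coeff ν F * ((ν 0).factorial * (ν 1).factorial * (ν 2).factorial : ℕ) := by
  rw [constantCoeff_eq, coeff_iterate_pderiv, coeff_iterate_pderiv, coeff_iterate_pderiv,
    zero_add, finsupp_fin_three]
  simp [Nat.one_ascFactorial]
  ring

/-- The Taylor expansion of a polynomial at an `R`-valued point. -/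
noncomputable def taylorAt {R : Type*} [CommRing R] [Algebra ℂ R] (q : Fin 3 → R) :
    MvPolynomial (Fin 3) ℂ →ₐ[ℂ] MvPolynomial (Fin 3) R :=
  aeval (fun i => X i + C (q i))

section Taylor

variable {R : Type*} [CommRing R] [Algebra ℂ R] (q u : Fin 3 → R)

theorem pderiv_taylorAt (i : Fin 3) (F : MvPolynomial (Fin 3) ℂ) :
    pderiv i (taylorAt q F) = taylorAt q (pderiv i F) := by
  induction F using MvPolynomial.induction_on with
  | C a =>
    rw [pderiv_C, map_zero, taylorAt, aeval_C, IsScalarTower.algebraMap_apply ℂ R,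
      MvPolynomial.algebraMap_eq, pderiv_C]
  | add p q hp hq => simp [hp, hq]
  | mul_X p j h =>
    rw [map_mul, pderiv_mul, h, pderiv_mul, map_add, map_mul, map_mul]
    rcases eq_or_ne j i with rfl | h
    · simp [taylorAt]
    · simp [taylorAt, h]

theorem iterate_pderiv_taylorAt (i : Fin 3) (k : ℕ) (F : MvPolynomial (Fin 3) ℂ) :
    (pderiv i)^[k] (taylorAt q F) = taylorAt q ((pderiv i)^[k] F) :=
  ((Function.Semiconj.iterate_right (f := taylorAt q) (ga := pderiv i) (gb := pderiv i)
    (fun F => (pderiv_taylorAt q i F).symm) k) F).symm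

theorem constantCoeff_taylorAt (F : MvPolynomial (Fin 3) ℂ) :
    constantCoeff (taylorAt q F) = aeval q F := by
  induction F using MvPolynomial.induction_on with
  | C a => simp [taylorAt, IsScalarTower.algebraMap_apply ℂ R (MvPolynomial (Fin 3) R),
      MvPolynomial.algebraMap_eq]
  | add p q hp hq => simp [hp, hq]
  | mul_X p j h => simp [h]; simp [taylorAt]

theorem aeval_mderiv (ν : Fin 3 →₀ ℕ) (F : MvPolynomial (Fin 3) ℂ) :
    aeval q (mderiv ν F) = coeff ν (taylorAt q F) *
      ((ν 0).factorial * (ν 1).factorial * (ν 2).factorial : ℕ) := by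
  rw [mderiv_apply, ← constantCoeff_taylorAt, ← iterate_pderiv_taylorAt,
    ← iterate_pderiv_taylorAt, ← iterate_pderiv_taylorAt, constantCoeff_iterate_pderiv]

theorem coeff_taylorAt (ν : Fin 3 →₀ ℕ) (F : MvPolynomial (Fin 3) ℂ) :
    coeff ν (taylorAt q F) =
      (((ν 0).factorial * (ν 1).factorial * (ν 2).factorial : ℕ) : ℂ)⁻¹ •
        aeval q (mderiv ν F) := by
  have h : (((ν 0).factorial * (ν 1).factorial * (ν 2).factorial : ℕ) : ℂ) ≠ 0 := by
    exact_mod_cast by positivity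
  rw [aeval_mderiv, eq_inv_smul_iff₀ h, Nat.cast_smul_eq_nsmul ℂ, nsmul_eq_mul, mul_comm]

theorem aeval_add_eq_sum (F : MvPolynomial (Fin 3) ℂ) :
    aeval (q + u) F =
      ∑ ν ∈ (taylorAt q F).support, coeff ν (taylorAt q F) * ∏ i, u i ^ ν i := by
  have h : aeval (q + u) F = aeval u (taylorAt q F) := by
    induction F using MvPolynomial.induction_on with
    | C a => simp [taylorAt, IsScalarTower.algebraMap_apply ℂ R (MvPolynomial (Fin 3) R),
        MvPolynomial.algebraMap_eq]
    | add p q hp hq => simp [hp, hq]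
    | mul_X p j h => simp [h]; simp [taylorAt, add_comm]
  rw [h, aeval_eq_eval, eval_eq']

/-- If all partial derivatives of order `< m` of `F` vanish at `q`, then `F (q + u)` lies in the
`m`-th power of any ideal containing the coordinates of `u`. -/
theorem aeval_add_mem_pow (F : MvPolynomial (Fin 3) ℂ) (m : ℕ)
    (hF : ∀ ν : Fin 3 → ℕ, ν 0 + ν 1 + ν 2 < m → aeval q (mderiv ν F) = 0)
    (I : Ideal R) (hu : ∀ i, u i ∈ I) : aeval (q + u) F ∈ I ^ m := by
  rw [aeval_add_eq_sum]
  refine Ideal.sum_mem _ fun ν _ => ?_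
  by_cases hν : ν 0 + ν 1 + ν 2 < m
  · simp [coeff_taylorAt, hF ν hν]
  · refine Ideal.mul_mem_left _ _ (Ideal.pow_le_pow_right (not_lt.mp hν) ?_)
    rw [Fin.prod_univ_three, pow_add, pow_add]
    exact Ideal.mul_mem_mul (Ideal.mul_mem_mul (Ideal.pow_mem_pow (hu 0) _)
      (Ideal.pow_mem_pow (hu 1) _)) (Ideal.pow_mem_pow (hu 2) _)

end Taylor

theorem MvPolynomial.IsHomogeneous.iterate_pderiv {σ R : Type*} [CommSemiring R] {n : ℕ} {i : σ}
    {F : MvPolynomial σ R} (hF : F.IsHomogeneous n) (k : ℕ) :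
    ((MvPolynomial.pderiv i)^[k] F).IsHomogeneous (n - k) := by
  induction k with
  | zero => exact hF
  | succ k ih => rw [Function.iterate_succ_apply', ← Nat.sub_sub]; exact ih.pderiv

theorem isHomogeneous_mderiv {d : ℕ} {F : MvPolynomial (Fin 3) ℂ} (hF : F.IsHomogeneous d)
    (ν : Fin 3 → ℕ) : (mderiv ν F).IsHomogeneous (d - (ν 0 + ν 1 + ν 2)) := by
  rw [mderiv_apply]
  convert ((hF.iterate_pderiv (i := 2) (ν 2)).iterate_pderiv (i := 1) (ν 1)).iterate_pderiv
    (i := 0) (ν 0) using 1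
  omega

theorem aeval_smul_of_isHomogeneous {R : Type*} [CommRing R] [Algebra ℂ R] {d : ℕ}
    {F : MvPolynomial (Fin 3) ℂ} (hF : F.IsHomogeneous d) (w : R) (p : Fin 3 → ℂ) :
    aeval (fun i => w * algebraMap ℂ R (p i)) F = w ^ d * algebraMap ℂ R (aeval p F) := by
  rw [F.as_sum, map_sum, map_sum, map_sum, Finset.mul_sum]
  refine Finset.sum_congr rfl fun ν hν => ?_
  have h := hF (mem_support_iff.mp hν)
  replace h : ν.degree = d := by rw [← h, Finsupp.degree_eq_weight_one]; rfl
  rw [aeval_monomial, aeval_monomial, Finsupp.prod_fintype _ _ (by simp),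
    Finsupp.prod_fintype _ _ (by simp), ← h, Finsupp.degree_eq_sum, ← Finset.prod_pow_eq_pow_sum]
  simp only [mul_pow, Finset.prod_mul_distrib, map_mul, map_prod, map_pow]
  simp
  ring

theorem mem_linSys {k : ℕ} {p : Fin k → Fin 3 → ℂ} {d : ℕ} {m : Fin k → ℕ}
    {F : MvPolynomial (Fin 3) ℂ} :
    F ∈ linSys p d m ↔ F.IsHomogeneous d ∧
      ∀ i, ∀ ν : Fin 3 → ℕ, ν 0 + ν 1 + ν 2 < m i → aeval (p i) (mderiv ν F) = 0 := by
  simp [linSys, Submodule.mem_iInf]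

theorem pderiv_commute {σ R : Type*} [CommSemiring R] (i j : σ) :
    Function.Commute (pderiv (R := R) i) (pderiv j) := by
  intro F
  ext μ
  rcases eq_or_ne i j with rfl | h
  · rfl
  · simp only [coeff_pderiv, Finsupp.add_apply, Finsupp.single_eq_of_ne h,
      Finsupp.single_eq_of_ne h.symm, add_right_comm μ, add_zero]
    ring

theorem pderiv_mderiv (i : Fin 3) (ν : Fin 3 → ℕ) (F : MvPolynomial (Fin 3) ℂ) :
    pderiv i (mderiv ν F) = mderiv (ν + Pi.single i 1) F := by
  have h (j k : Fin 3) (m : ℕ) (G : MvPolynomial (Fin 3) ℂ) :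
      pderiv j ((pderiv k)^[m] G) = (pderiv k)^[m] (pderiv j G) :=
    (pderiv_commute j k).iterate_right m G
  rw [mderiv_apply, mderiv_apply]
  fin_cases i
  · simp [Function.iterate_succ_apply']
  · simp [Function.iterate_succ_apply', h 1 0]
  · simp [Function.iterate_succ_apply', h 2 0, h 2 1]

/-- By Euler's identity, for a homogeneous polynomial the vanishing of all partial derivatives of
order `k ≤ d` at a point implies the vanishing of those of lower order. -/
theorem aeval_mderiv_eq_zero_of_order_eq {d k : ℕ} (hk : k ≤ d) {F : MvPolynomial (Fin 3) ℂ}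
    (hF : F.IsHomogeneous d) (q : Fin 3 → ℂ)
    (h : ∀ ν : Fin 3 → ℕ, ν 0 + ν 1 + ν 2 = k → aeval q (mderiv ν F) = 0)
    (ν : Fin 3 → ℕ) (hν : ν 0 + ν 1 + ν 2 ≤ k) : aeval q (mderiv ν F) = 0 := by
  obtain ⟨j, hj⟩ : ∃ j, ν 0 + ν 1 + ν 2 + j = k := ⟨_, Nat.add_sub_cancel' hν⟩
  induction j generalizing ν with
  | zero => exact h ν hj
  | succ j ih =>
    have e := congrArg (aeval q) (isHomogeneous_mderiv hF ν).sum_X_mul_pderiv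
    rw [map_sum, Finset.sum_eq_zero, map_nsmul, eq_comm, nsmul_eq_mul, mul_eq_zero,
      Nat.cast_eq_zero] at e
    · exact e.resolve_left (by omega)
    · intro i _
      rw [pderiv_mderiv, map_mul, ih _ _ _, mul_zero]
      all_goals fin_cases i <;> simp <;> omega

/-- If `F` has multiplicity `m` at `p`, then the `k`-th derivative of `F` in the direction of `p`
vanishes everywhere for `k > d - m`; so the derivatives of order `k` at `q` are dependent. -/
theorem aeval_mderiv_single_eq_zero {d m k : ℕ} {F : MvPolynomial (Fin 3) ℂ}
    (hF : F.IsHomogeneous d) (p q : Fin 3 → ℂ)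
    (hp : ∀ ν : Fin 3 → ℕ, ν 0 + ν 1 + ν 2 < m → aeval p (mderiv ν F) = 0)
    (hk : d - m < k) (c : Fin 3) (hc : p c ≠ 0)
    (hq : ∀ ν : Fin 3 → ℕ, ν 0 + ν 1 + ν 2 = k → ν ≠ Finsupp.single c k →
      aeval q (mderiv ν F) = 0) :
    aeval q (mderiv (Finsupp.single c k) F) = 0 := by
  let P : Fin 3 → Polynomial ℂ := fun i => Polynomial.X * algebraMap ℂ _ (p i)
  let Q : Fin 3 → Polynomial ℂ := fun i => 1 * algebraMap ℂ _ (q i)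
  have hP : (aeval (P + Q) F).coeff k = 0 := by
    rw [aeval_add_eq_sum, Polynomial.finsetSum_coeff]
    refine Finset.sum_eq_zero fun ν _ => ?_
    rw [coeff_taylorAt, aeval_smul_of_isHomogeneous (isHomogeneous_mderiv hF _)]
    by_cases h : ν 0 + ν 1 + ν 2 < m
    · simp [hp ν h]
    · simp only [Q, one_mul, ← map_pow, ← map_prod, Polynomial.algebraMap_eq, smul_mul_assoc,
        mul_assoc, ← Polynomial.C_mul, Polynomial.coeff_smul, Polynomial.coeff_mul_C,
        Polynomial.coeff_X_pow]
      rw [if_neg (by omega)]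
      simp
  have hQ : (aeval (Q + P) F).coeff k = coeff (Finsupp.single c k) (taylorAt q F) * p c ^ k := by
    have key (ν : Fin 3 →₀ ℕ) : (coeff ν (taylorAt Q F) * ∏ i, P i ^ ν i).coeff k =
        if ν.degree = k then coeff ν (taylorAt q F) * ∏ i, p i ^ ν i else 0 := by
      rw [coeff_taylorAt, aeval_smul_of_isHomogeneous (isHomogeneous_mderiv hF _),
        coeff_taylorAt]
      simp only [P, mul_pow, Finset.prod_mul_distrib, Finset.prod_pow_eq_pow_sum, ← map_pow,
        ← map_prod, Polynomial.algebraMap_eq, one_pow, one_mul, Finsupp.degree_eq_sum]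
      rw [smul_mul_assoc, Polynomial.coeff_smul, Polynomial.coeff_C_mul, Polynomial.coeff_mul_C,
        Polynomial.coeff_X_pow]
      simp only [eq_comm (a := k)]
      split_ifs <;> simp
      ring
    rw [aeval_add_eq_sum, Polynomial.finsetSum_coeff, Finset.sum_eq_single (Finsupp.single c k)]
    · rw [key, if_pos (by simp), Finset.prod_eq_single c] <;> simp +contextual
    · intro ν _ hν
      rw [key]
      split_ifs with h
      · rw [coeff_taylorAt, hq ν (by rw [← h, degree_fin_three]) (by simpa using hν)]
        simp
      · rfl
    · intro h
      rw [notMem_support_iff.mp h]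
      simp
  rw [add_comm, hP] at hQ
  rw [aeval_mderiv, (mul_eq_zero.mp hQ.symm).resolve_right (pow_ne_zero _ hc), zero_mul]

theorem card_finsuppAntidiag_fin_three (k : ℕ) :
    (Finset.finsuppAntidiag (Finset.univ : Finset (Fin 3)) k).card = (k + 2).choose 2 := by
  rw [Finset.card_finsuppAntidiag_nat_eq_choose, Finset.card_univ, Fintype.card_fin,
    Nat.choose_symm_of_eq_add (b := 2) (by omega)]
  congr 1
  omega

theorem mem_finsuppAntidiag_fin_three {k : ℕ} {ν : Fin 3 →₀ ℕ} :
    ν ∈ Finset.finsuppAntidiag (Finset.univ : Finset (Fin 3)) k ↔ ν 0 + ν 1 + ν 2 = k := by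
  simp [Finset.mem_finsuppAntidiag, Fin.sum_univ_three]

instance finite_homogeneousSubmodule (d : ℕ) :
    Module.Finite ℂ (homogeneousSubmodule (Fin 3) ℂ d) :=
  Module.Finite.iff_fg.mpr (homogeneousSubmodule_fg (σ := Fin 3) (R := ℂ) d)

theorem finrank_homogeneousSubmodule_fin_three (d : ℕ) :
    Module.finrank ℂ (homogeneousSubmodule (Fin 3) ℂ d) = (d + 2).choose 2 := by
  have e : {ν : Fin 3 →₀ ℕ | ν.degree = d} =
      (Finset.finsuppAntidiag (Finset.univ : Finset (Fin 3)) d : Set (Fin 3 →₀ ℕ)) := by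
    ext ν
    rw [Finset.mem_coe, mem_finsuppAntidiag_fin_three, Set.mem_ofPred_eq, degree_fin_three]
  rw [homogeneousSubmodule_eq_finsupp_supported, e,
    (AddMonoidAlgebra.supportedEquivFinsupp (R := ℂ) (S := ℂ) _).finrank_eq,
    Module.finrank_finsupp_self, ← card_finsuppAntidiag_fin_three]
  simp

theorem Submodule.finrank_map_add_finrank_inf_ker {K V W : Type*} [Field K] [AddCommGroup V]
    [Module K V] [AddCommGroup W] [Module K W] (H : Submodule K V)
    [Module.Finite K H] (f : V →ₗ[K] W) :
    Module.finrank K (H.map f) + Module.finrank K (H ⊓ LinearMap.ker f : Submodule K V) =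
      Module.finrank K H := by
  rw [← (f.domRestrict H).finrank_range_add_finrank_ker, LinearMap.ker_domRestrict,
    ← Submodule.finrank_map_subtype_eq H, Submodule.map_comap_subtype, LinearMap.range_domRestrict]

theorem Submodule.finrank_le_finrank_inf_ker_add {K V W : Type*} [Field K] [AddCommGroup V]
    [Module K V] [AddCommGroup W] [Module K W] [Module.Finite K W] (H : Submodule K V)
    [Module.Finite K H] (f : V →ₗ[K] W) :
    Module.finrank K H ≤ Module.finrank K (H ⊓ LinearMap.ker f : Submodule K V) +
      Module.finrank K W := by
  rw [← H.finrank_map_add_finrank_inf_ker f, add_comm]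
  exact Nat.add_le_add_left (Submodule.finrank_le _) _

theorem linSys_le_homogeneousSubmodule {k : ℕ} (p : Fin k → Fin 3 → ℂ) (d : ℕ) (m : Fin k → ℕ) :
    linSys p d m ≤ homogeneousSubmodule (Fin 3) ℂ d :=
  inf_le_left

instance finite_linSys {k : ℕ} (p : Fin k → Fin 3 → ℂ) (d : ℕ) (m : Fin k → ℕ) :
    Module.Finite ℂ (linSys p d m) :=
  Submodule.finiteDimensional_of_le (linSys_le_homogeneousSubmodule p d m)

theorem le_finrank_linSys {d n : ℕ} (hd : 5 ≤ d) (p : Fin (n + 1) → Fin 3 → ℂ) (hp : p 0 ≠ 0) :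
    5 * d ≤ Module.finrank ℂ (linSys p d (qh n (d - 4))) + 20 * n + 5 := by
  obtain ⟨c, hc⟩ := Function.ne_iff.mp hp
  let A := Finset.finsuppAntidiag (Finset.univ : Finset (Fin 3)) (d - 5)
  let B := (Finset.finsuppAntidiag (Finset.univ : Finset (Fin 3)) 5).erase (Finsupp.single c 5)
  let f : MvPolynomial (Fin 3) ℂ →ₗ[ℂ] (A → ℂ) × (Fin n × B → ℂ) :=
    (LinearMap.pi fun a => (aeval (p 0)).toLinearMap ∘ₗ mderiv a.1).prod
      (LinearMap.pi fun b => (aeval (p b.1.succ)).toLinearMap ∘ₗ mderiv b.2.1)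
  have hle : homogeneousSubmodule (Fin 3) ℂ d ⊓ LinearMap.ker f ≤
      linSys p d (qh n (d - 4)) := by
    rintro F ⟨hF, hker⟩
    have hF : F.IsHomogeneous d := hF
    obtain ⟨h1, h2⟩ := Prod.ext_iff.mp hker
    have h0 (ν : Fin 3 → ℕ) (hν : ν 0 + ν 1 + ν 2 < d - 4) : aeval (p 0) (mderiv ν F) = 0 := by
      refine aeval_mderiv_eq_zero_of_order_eq (k := d - 5) (by omega) hF _ (fun ν hν => ?_) ν
        (by omega)
      exact congrFun h1 ⟨Finsupp.equivFunOnFinite.symm ν, mem_finsuppAntidiag_fin_three.mpr hν⟩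
    refine mem_linSys.mpr ⟨hF, fun i => ?_⟩
    induction i using Fin.cases with
    | zero => simpa [qh] using h0
    | succ i =>
      have h5 (ν : Fin 3 → ℕ) (hν : ν 0 + ν 1 + ν 2 = 5) (hne : ν ≠ Finsupp.single c 5) :
          aeval (p i.succ) (mderiv ν F) = 0 :=
        congrFun h2 ⟨i, Finsupp.equivFunOnFinite.symm ν, Finset.mem_erase.mpr
          ⟨fun h => hne (by rw [← h]; rfl), mem_finsuppAntidiag_fin_three.mpr hν⟩⟩
      intro ν hν
      rw [qh, if_neg (Fin.succ_ne_zero i)] at hν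
      refine aeval_mderiv_eq_zero_of_order_eq hd hF _ (fun ν hν => ?_) ν (by omega)
      by_cases hne : ν = Finsupp.single c 5
      · rw [hne]
        exact aeval_mderiv_single_eq_zero hF (p 0) _ h0 (by omega) c hc h5
      · exact h5 ν hν hne
  have hB : B.card = 20 := by
    rw [Finset.card_erase_of_mem, card_finsuppAntidiag_fin_three]
    · rfl
    · rw [mem_finsuppAntidiag_fin_three, ← degree_fin_three, Finsupp.degree_single]
  have h := (Submodule.finrank_le_finrank_inf_ker_add _ f).trans
    (Nat.add_le_add_right (Submodule.finrank_mono hle) _)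
  rw [finrank_homogeneousSubmodule_fin_three, Module.finrank_prod, Module.finrank_fintype_fun_eq_card,
    Module.finrank_fintype_fun_eq_card, Fintype.card_prod, Fintype.card_fin, Fintype.card_coe,
    Fintype.card_coe, hB, card_finsuppAntidiag_fin_three] at h
  obtain ⟨e, rfl⟩ := Nat.exists_eq_add_of_le' hd
  have hch : (e + 5 + 2).choose 2 = (e + 2).choose 2 + 5 * e + 20 := by
    simp only [Nat.choose_succ_succ' _ 1, Nat.choose_one_right]
    ring
  rw [Nat.add_sub_cancel] at h
  omega

/-- Linear independence is an open condition: vectors with polynomial entries that are linearly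
independent at one point are linearly independent where a suitable polynomial does not vanish. -/
theorem exists_eval_ne_zero_forall_linearIndependent {K σ ι J : Type*} [Field K] [Fintype ι]
    [Fintype J] (v : ι → J → MvPolynomial σ K) (x₀ : σ → K)
    (h : LinearIndependent K fun a j => eval x₀ (v a j)) :
    ∃ P : MvPolynomial σ K, eval x₀ P ≠ 0 ∧
      ∀ x, eval x P ≠ 0 → LinearIndependent K fun a j => eval x (v a j) := by
  classical
  obtain ⟨g, hg⟩ := LinearMap.exists_leftInverse_of_injective
    (Fintype.linearCombination K fun a j => eval x₀ (v a j))
    (LinearMap.ker_eq_bot.mpr (linearIndependent_iff_injective_fintypeLinearCombination.mp h))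
  let M : Matrix ι ι (MvPolynomial σ K) :=
    Matrix.of fun a b => ∑ j, C (g (Pi.single j 1) a) * v b j
  have hM (x : σ → K) : (eval x).mapMatrix M =
      Matrix.of fun a b => g (fun j => eval x (v b j)) a := by
    ext a b
    simp only [M, RingHom.mapMatrix_apply, Matrix.map_apply, Matrix.of_apply, map_sum, map_mul,
      eval_C]
    conv_rhs => rw [pi_eq_sum_univ' (fun j => eval x (v b j))]
    simp only [map_sum, map_smul, Finset.sum_apply, Pi.smul_apply, smul_eq_mul]
    refine Finset.sum_congr rfl fun j _ => ?_
    rw [mul_comm]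
  refine ⟨M.det, ?_, fun x hx => ?_⟩
  · have h1 : (eval x₀).mapMatrix M = 1 := by
      rw [hM]
      ext a b
      have := congrFun (LinearMap.congr_fun hg (Pi.single b 1)) a
      rw [LinearMap.comp_apply, Fintype.linearCombination_apply_single, one_smul] at this
      rw [Matrix.of_apply, this, Matrix.one_apply]
      simp [Pi.single_apply]
    rw [RingHom.map_det, h1, Matrix.det_one]
    exact one_ne_zero
  · rw [RingHom.map_det, hM] at hx
    have := Matrix.linearIndependent_cols_of_det_ne_zero hx
    exact LinearIndependent.of_comp g this

/-- The dimension of a linear system is upper semicontinuous in the points. -/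
theorem exists_eval_ne_zero_forall_finrank_linSys_le {k : ℕ} (p₀ : Fin k → Fin 3 → ℂ) (d : ℕ)
    (m : Fin k → ℕ) :
    ∃ P : MvPolynomial (Fin k × Fin 3) ℂ, eval (fun x => p₀ x.1 x.2) P ≠ 0 ∧
      ∀ p : Fin k → Fin 3 → ℂ, eval (fun x => p x.1 x.2) P ≠ 0 →
        Module.finrank ℂ (linSys p d m) ≤ Module.finrank ℂ (linSys p₀ d m) := by
  classical
  let J := Σ i : Fin k, {ν : Fin 3 → Fin (m i) // (ν 0 + ν 1 + ν 2 : ℕ) < m i}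
  let H := homogeneousSubmodule (Fin 3) ℂ d
  let f (p : Fin k → Fin 3 → ℂ) : MvPolynomial (Fin 3) ℂ →ₗ[ℂ] J → ℂ :=
    LinearMap.pi fun j => (aeval (p j.1)).toLinearMap ∘ₗ mderiv fun l => j.2.1 l
  have hf (p : Fin k → Fin 3 → ℂ) : linSys p d m = H ⊓ LinearMap.ker (f p) := by
    ext F
    rw [mem_linSys, Submodule.mem_inf, LinearMap.mem_ker, funext_iff]
    refine and_congr Iff.rfl ⟨fun h j => h j.1 _ j.2.2, fun h i ν hν => ?_⟩
    have hl (l : Fin 3) : ν l < m i := by fin_cases l <;> simp <;> omega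
    exact h ⟨i, fun l => ⟨ν l, hl l⟩, hν⟩
  let b := Module.finBasis ℂ (H.map (f p₀))
  choose v hvH hv using fun a => Submodule.mem_map.mp (b a).2
  have heval (p : Fin k → Fin 3 → ℂ) :
      (fun a (j : J) => eval (fun x : Fin k × Fin 3 => p x.1 x.2)
        (rename (Prod.mk j.1) (mderiv (fun l => j.2.1 l) (v a)))) = fun a => f p (v a) := by
    ext a j
    rw [eval_rename]
    rfl
  obtain ⟨P, hP₀, hP⟩ := exists_eval_ne_zero_forall_linearIndependent
    (fun a (j : J) => rename (Prod.mk j.1) (mderiv (fun l => j.2.1 l) (v a)))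
    (fun x : Fin k × Fin 3 => p₀ x.1 x.2) (by
      rw [heval]
      simp only [hv]
      exact b.linearIndependent.map' (Submodule.subtype _) (Submodule.ker_subtype _))
  refine ⟨P, hP₀, fun p hp => ?_⟩
  have hli := hP _ hp
  rw [heval] at hli
  have hrank : Module.finrank ℂ (H.map (f p₀)) ≤ Module.finrank ℂ (H.map (f p)) := by
    have := LinearIndependent.fintype_card_le_finrank (R := ℂ) (M := H.map (f p))
      (b := fun a => ⟨f p (v a), Submodule.mem_map_of_mem (hvH a)⟩)
      (LinearIndependent.of_comp (Submodule.subtype _) hli)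
    simpa using this
  have h₀ := Submodule.finrank_map_add_finrank_inf_ker H (f p₀)
  have h₁ := Submodule.finrank_map_add_finrank_inf_ker H (f p)
  rw [hf, hf]
  omega

/-- The exponent vector `(i, j, l)`. -/
noncomputable def expo (i j l : ℕ) : Fin 3 →₀ ℕ := Finsupp.equivFunOnFinite.symm ![i, j, l]

/-- The coefficient of `Z ^ j` in `F(1, Y, Z)`, for `F` homogeneous of degree `d`. -/
noncomputable def zCoeff (d j : ℕ) : MvPolynomial (Fin 3) ℂ →ₗ[ℂ] Polynomial ℂ :=
  ∑ i ∈ Finset.range (d - j + 1), Polynomial.monomial i ∘ₗ lcoeff ℂ (expo (d - i - j) i j)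

theorem zCoeff_apply (d j : ℕ) (F : MvPolynomial (Fin 3) ℂ) :
    zCoeff d j F = ∑ i ∈ Finset.range (d - j + 1),
      Polynomial.monomial i (coeff (expo (d - i - j) i j) F) := by
  simp [zCoeff]

theorem natDegree_zCoeff_le (d j : ℕ) (F : MvPolynomial (Fin 3) ℂ) :
    (zCoeff d j F).natDegree ≤ d - j := by
  rw [zCoeff_apply]
  refine Polynomial.natDegree_sum_le_of_forall_le _ _ fun i hi => ?_
  exact (Polynomial.natDegree_monomial_le _).trans (Nat.lt_succ_iff.mp (Finset.mem_range.mp hi))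

theorem eq_sum_monomial_expo {d N : ℕ} (hN : N ≤ d) {F : MvPolynomial (Fin 3) ℂ}
    (hF : F.IsHomogeneous d) (h0 : ∀ ν : Fin 3 →₀ ℕ, N < ν 2 → coeff ν F = 0) :
    F = ∑ j ∈ Finset.range (N + 1), ∑ i ∈ Finset.range (d - j + 1),
      monomial (expo (d - i - j) i j) (coeff (expo (d - i - j) i j) F) := by
  ext ν
  simp only [coeff_sum, coeff_monomial]
  by_cases hν : ν.degree = d ∧ ν 2 ≤ N
  · obtain ⟨h1, h2⟩ := hν
    rw [degree_fin_three] at h1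
    have hν : expo (d - ν 1 - ν 2) (ν 1) (ν 2) = ν := by
      ext i; fin_cases i <;> simp [expo]; omega
    rw [Finset.sum_eq_single (ν 2), Finset.sum_eq_single (ν 1), if_pos hν, hν]
    · intro i _ hi
      refine if_neg fun h => hi ?_
      simpa [expo] using DFunLike.congr_fun h 1
    · intro h
      exact absurd (Finset.mem_range.mpr (by omega)) h
    · intro j _ hj
      refine Finset.sum_eq_zero fun i _ => if_neg fun h => hj ?_
      simpa [expo] using DFunLike.congr_fun h 2
    · intro h
      exact absurd (Finset.mem_range.mpr (by omega)) h
  · have hc : coeff ν F = 0 := by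
      by_cases h : ν.degree = d
      · exact h0 ν (not_le.mp fun h' => hν ⟨h, h'⟩)
      · exact hF.coeff_eq_zero h
    rw [hc]
    refine (Finset.sum_eq_zero fun j _ => Finset.sum_eq_zero fun i _ => ?_).symm
    split_ifs with h
    · rw [h, hc]
    · rfl

theorem aeval_eq_pow_mul_sum {d N : ℕ} (hN : N ≤ d) {F : MvPolynomial (Fin 3) ℂ}
    (hF : F.IsHomogeneous d) (h0 : ∀ ν : Fin 3 →₀ ℕ, N < ν 2 → coeff ν F = 0)
    (z w : Polynomial (Polynomial ℂ)) :
    aeval ![w, Polynomial.C Polynomial.X * w, z] F = w ^ (d - N) *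
      ∑ j ∈ Finset.range (N + 1), Polynomial.C (zCoeff d j F) * z ^ j * w ^ (N - j) := by
  conv_lhs => rw [eq_sum_monomial_expo hN hF h0]
  rw [map_sum, Finset.mul_sum]
  refine Finset.sum_congr rfl fun j hj => ?_
  have hj := Finset.mem_range.mp hj
  rw [map_sum, zCoeff_apply, map_sum, Finset.sum_mul, Finset.sum_mul, Finset.mul_sum]
  refine Finset.sum_congr rfl fun i hi => ?_
  have hi := Finset.mem_range.mp hi
  rw [aeval_monomial, Finsupp.prod_fintype _ _ (by simp), Fin.prod_univ_three,
    ← Polynomial.C_mul_X_pow_eq_monomial]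
  generalize coeff (expo (d - i - j) i j) F = c
  simp only [expo, Finsupp.equivFunOnFinite_symm_apply_apply, Matrix.cons_val, mul_pow]
  rw [show d - i - j = (d - N) + (N - j) - i by omega, Polynomial.C_mul, Polynomial.C_pow,
    IsScalarTower.algebraMap_apply ℂ (Polynomial ℂ), Polynomial.algebraMap_eq,
    Polynomial.algebraMap_eq]
  have hw : w ^ (d - N) * w ^ (N - j) = w ^ (d - N + (N - j) - i) * w ^ i := by
    rw [← pow_add, ← pow_add]; congr 1; omega
  linear_combination (-1) * Polynomial.C (Polynomial.C c) *
    Polynomial.C Polynomial.X ^ i * z ^ j * hw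

theorem coeff_eq_zero_of_multiplicity {d m : ℕ} {F : MvPolynomial (Fin 3) ℂ}
    (hF : F.IsHomogeneous d)
    (h : ∀ ν : Fin 3 → ℕ, ν 0 + ν 1 + ν 2 < m → aeval ![(0 : ℂ), 0, 1] (mderiv ν F) = 0)
    (ν : Fin 3 →₀ ℕ) (hν : d - m < ν 2) : coeff ν F = 0 := by
  by_cases hdeg : ν.degree = d
  · rw [degree_fin_three] at hdeg
    have h1 := h ![ν 0, ν 1, 0] (by simp; omega)
    have hG := isHomogeneous_mderiv hF ![ν 0, ν 1, 0]
    rw [show d - _ = ν 2 by simp; omega] at hG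
    rw [aeval_eq_eval, eval_eq', Finset.sum_eq_single (Finsupp.single 2 (ν 2))] at h1
    · rw [mderiv_apply] at h1
      simp only [Matrix.cons_val, Function.iterate_zero, id_eq, coeff_iterate_pderiv,
        Fin.prod_univ_three] at h1
      have e : Finsupp.single (2 : Fin 3) (ν 2) + Finsupp.single 0 (ν 0) +
          Finsupp.single 1 (ν 1) = ν := by
        rw [add_assoc, add_comm, finsupp_fin_three]
      rw [e] at h1
      simpa [Nat.one_ascFactorial, Nat.factorial_ne_zero, (Nat.ascFactorial_pos _ _).ne'] using h1
    · intro μ hμ hne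
      have h2 := hG (mem_support_iff.mp hμ)
      replace h2 : μ.degree = ν 2 := by rw [← h2, Finsupp.degree_eq_weight_one]; rfl
      rw [degree_fin_three] at h2
      have h3 : μ 0 ≠ 0 ∨ μ 1 ≠ 0 := by
        by_contra! h3
        refine hne ?_
        rw [← finsupp_fin_three μ, h3.1, h3.2, ← h2, h3.1, h3.2]
        simp
      rw [Fin.prod_univ_three]
      rcases h3 with h3 | h3 <;> simp [h3]
    · intro h
      rw [notMem_support_iff.mp h, zero_mul]
  · exact hF.coeff_eq_zero hdeg

section BinaryForm

variable (a k : ℕ)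

/-- The coordinate `Z` in terms of the affine coordinate `T = (Z + Y ^ k) / (1 + Y ^ a Z)`,
up to the common denominator `denForm`. -/
noncomputable def numForm : Polynomial (Polynomial ℂ) :=
  Polynomial.X - Polynomial.C (Polynomial.X ^ k)

/-- The denominator of the coordinate `Z` in terms of `T = (Z + Y ^ k) / (1 + Y ^ a Z)`. -/
noncomputable def denForm : Polynomial (Polynomial ℂ) :=
  1 - Polynomial.C (Polynomial.X ^ a) * Polynomial.X

theorem eq_zero_of_sum_form_eq_zero (hk : 1 ≤ k) (N : ℕ) (A : ℕ → Polynomial ℂ)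
    (h : ∑ j ∈ Finset.range (N + 1),
      Polynomial.C (A j) * numForm k ^ j * denForm a ^ (N - j) = 0) :
    ∀ j ≤ N, A j = 0 := by
  have h1 : (1 - Polynomial.X ^ (a + k) : Polynomial ℂ) ≠ 0 := by
    intro h
    simpa [show ¬ (a = 0 ∧ k = 0) by omega] using congrArg (Polynomial.eval 0) h
  have hA (N : ℕ) (A : ℕ → Polynomial ℂ) (h : ∑ j ∈ Finset.range (N + 1),
      Polynomial.C (A j) * numForm k ^ j * denForm a ^ (N - j) = 0) : A 0 = 0 := by
    have h2 := congrArg (Polynomial.eval (Polynomial.X ^ k)) h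
    rw [Finset.sum_range_succ', Polynomial.eval_add, Polynomial.eval_finsetSum,
      Finset.sum_eq_zero (by simp [numForm])] at h2
    simp only [pow_zero, mul_one, Nat.sub_zero, zero_add, Polynomial.eval_mul, Polynomial.eval_C,
      Polynomial.eval_pow, denForm, Polynomial.eval_sub, Polynomial.eval_one, Polynomial.eval_X,
      Polynomial.eval_zero, ← pow_add] at h2
    exact (mul_eq_zero.mp h2).resolve_right (pow_ne_zero _ h1)
  induction N generalizing A with
  | zero =>
    intro j hj
    rw [Nat.le_zero.mp hj]
    exact hA 0 A h
  | succ N ih =>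
    have h0 := hA _ _ h
    intro j hj
    cases j with
    | zero => exact h0
    | succ j =>
      refine ih (fun j => A (j + 1)) ?_ j (by omega)
      rw [Finset.sum_range_succ', h0, Polynomial.C_0, zero_mul, zero_mul, add_zero] at h
      refine (mul_eq_zero.mp (?_ : numForm k * _ = 0)).resolve_left
        (Polynomial.X_sub_C_ne_zero _)
      rw [← h, Finset.mul_sum]
      refine Finset.sum_congr rfl fun j _ => ?_
      rw [Nat.add_sub_add_right]
      ring

/-- The polynomials in `T` over `ℂ[Y]` whose `l`-th coefficient has degree at most `e + l s`. -/
def SlopeLE (s e : ℕ) (h : Polynomial (Polynomial ℂ)) : Prop :=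
  ∀ l, (h.coeff l).natDegree ≤ e + l * s

theorem SlopeLE.mul {s e e' : ℕ} {g h : Polynomial (Polynomial ℂ)} (hg : SlopeLE s e g)
    (hh : SlopeLE s e' h) : SlopeLE s (e + e') (g * h) := by
  intro l
  rw [Polynomial.coeff_mul]
  refine Polynomial.natDegree_sum_le_of_forall_le _ _ fun x hx => ?_
  rw [← Finset.HasAntidiagonal.mem_antidiagonal.mp hx, add_mul]
  have h1 := hg x.1
  have h2 := hh x.2
  exact Polynomial.natDegree_mul_le.trans (by omega)

theorem SlopeLE.pow {s e : ℕ} {g : Polynomial (Polynomial ℂ)} (hg : SlopeLE s e g) (j : ℕ) :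
    SlopeLE s (j * e) (g ^ j) := by
  induction j with
  | zero =>
    intro l
    rw [pow_zero, Polynomial.coeff_one]
    split_ifs <;> simp
  | succ j ih => rw [pow_succ, add_mul, one_mul]; exact ih.mul hg

theorem slopeLE_C {s e : ℕ} {c : Polynomial ℂ} (h : c.natDegree ≤ e) :
    SlopeLE s e (Polynomial.C c) := by
  intro l
  rw [Polynomial.coeff_C]
  split_ifs
  · omega
  · simp

theorem slopeLE_numForm (s : ℕ) : SlopeLE s k (numForm k) := by
  intro l
  rw [numForm, Polynomial.coeff_sub, Polynomial.coeff_X, Polynomial.coeff_C]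
  refine (Polynomial.natDegree_sub_le _ _).trans (max_le ?_ ?_)
  · split_ifs <;> simp
  · split_ifs <;> simp

theorem slopeLE_denForm (s e : ℕ) (ha : a ≤ e + s) : SlopeLE s e (denForm a) := by
  intro l
  rw [denForm, Polynomial.coeff_sub, Polynomial.coeff_one, Polynomial.coeff_C_mul,
    Polynomial.coeff_X]
  refine (Polynomial.natDegree_sub_le _ _).trans (max_le ?_ ?_)
  · split_ifs <;> simp
  · split_ifs with h
    · rw [← h]; simpa using ha
    · simp

theorem slopeLE_sum_form {s d N : ℕ} (hN : N ≤ d) (hk : 1 ≤ k) (ha : a ≤ k - 1 + s)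
    (A : ℕ → Polynomial ℂ) (hA : ∀ j, (A j).natDegree ≤ d - j) :
    SlopeLE s (d + N * (k - 1)) (∑ j ∈ Finset.range (N + 1),
      Polynomial.C (A j) * numForm k ^ j * denForm a ^ (N - j)) := by
  intro l
  rw [Polynomial.finsetSum_coeff]
  refine Polynomial.natDegree_sum_le_of_forall_le _ _ fun j hj => ?_
  have hj := Finset.mem_range.mp hj
  convert (((slopeLE_C (hA j)).mul ((slopeLE_numForm k s).pow j)).mul
    ((slopeLE_denForm a s _ ha).pow (N - j))) l using 2
  obtain ⟨k, rfl⟩ := Nat.exists_eq_add_of_le' hk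
  obtain ⟨i, rfl⟩ := Nat.exists_eq_add_of_le (Nat.lt_succ_iff.mp hj)
  obtain ⟨e, rfl⟩ := Nat.exists_eq_add_of_le hN
  rw [Nat.add_sub_cancel, Nat.add_sub_cancel_left, show j + i + e - j = i + e by omega]
  ring

theorem natDegree_sum_form_le (N : ℕ) (A : ℕ → Polynomial ℂ) :
    (∑ j ∈ Finset.range (N + 1),
      Polynomial.C (A j) * numForm k ^ j * denForm a ^ (N - j)).natDegree ≤ N := by
  refine Polynomial.natDegree_sum_le_of_forall_le _ _ fun j hj => ?_
  have hj := Finset.mem_range.mp hj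
  have h1 : (numForm k).natDegree ≤ 1 := by unfold numForm; compute_degree
  have h2 : (denForm a).natDegree ≤ 1 := by unfold denForm; compute_degree
  have h3 := Polynomial.natDegree_pow_le_of_le j h1
  have h4 := Polynomial.natDegree_pow_le_of_le (N - j) h2
  have h5 := Polynomial.natDegree_mul_le_of_le
    (Polynomial.natDegree_mul_le_of_le (Polynomial.natDegree_C (A j)).le h3) h4
  omega

end BinaryForm

theorem pow_dvd_sum_form {d N m a k : ℕ} (hN : N ≤ d)
    {F : MvPolynomial (Fin 3) ℂ} (hF : F.IsHomogeneous d)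
    (h0 : ∀ ν : Fin 3 →₀ ℕ, N < ν 2 → coeff ν F = 0) {α : ℂ} (hα : α ^ (a + k) = 1)
    (hm : ∀ ν : Fin 3 → ℕ, ν 0 + ν 1 + ν 2 < m → aeval ![1, α, -α ^ k] (mderiv ν F) = 0) :
    Polynomial.C (Polynomial.X - Polynomial.C α) ^ m ∣ ∑ j ∈ Finset.range (N + 1),
      Polynomial.C (zCoeff d j F) * numForm k ^ j * denForm a ^ (N - j) := by
  set r : Polynomial (Polynomial ℂ) := Polynomial.C (Polynomial.X - Polynomial.C α) with hr
  set w := denForm a with hw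
  set q : Fin 3 → Polynomial (Polynomial ℂ) :=
    fun i => w * algebraMap ℂ _ (![1, α, -α ^ k] i) with hq
  have hC (c : ℂ) : algebraMap ℂ (Polynomial (Polynomial ℂ)) c =
      Polynomial.C (Polynomial.C c) := rfl
  have hdvd (j : ℕ) : r ∣ Polynomial.C (Polynomial.X ^ j) -
      Polynomial.C (Polynomial.C (α ^ j)) := by
    rw [← Polynomial.C_sub, Polynomial.C_pow]
    exact map_dvd Polynomial.C (sub_dvd_pow_sub_pow _ _ j)
  have hu (i : Fin 3) : (![w, Polynomial.C Polynomial.X * w, numForm k] - q) i ∈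
      Ideal.span {r} := by
    rw [Ideal.mem_span_singleton]
    fin_cases i
    · simp [hq]
    · refine ⟨w, ?_⟩
      simp [hq, hC, hr]
      ring
    · have e : numForm k - q 2 = -(Polynomial.X * Polynomial.C (Polynomial.C (α ^ k)) *
          (Polynomial.C (Polynomial.X ^ a) - Polynomial.C (Polynomial.C (α ^ a)))) -
          (Polynomial.C (Polynomial.X ^ k) - Polynomial.C (Polynomial.C (α ^ k))) := by
        have h1 : Polynomial.C (Polynomial.C (α ^ a)) * Polynomial.C (Polynomial.C (α ^ k)) =
            (1 : Polynomial (Polynomial ℂ)) := by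
          rw [← Polynomial.C_mul, ← Polynomial.C_mul, ← pow_add, hα, Polynomial.C_1,
            Polynomial.C_1]
        simp only [hq, hC, hw, numForm, denForm, Matrix.cons_val, Polynomial.C_neg]
        linear_combination (-Polynomial.X) * h1
      change r ∣ numForm k - q 2
      rw [e]
      exact dvd_sub (((hdvd a).mul_left _).neg_right) (hdvd k)
  have h1 := aeval_add_mem_pow q (![w, Polynomial.C Polynomial.X * w, numForm k] - q) F m
    (fun ν hν => by
      rw [hq, aeval_smul_of_isHomogeneous (isHomogeneous_mderiv hF ν), hm ν hν, map_zero,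
        mul_zero]) _ hu
  rw [add_sub_cancel, aeval_eq_pow_mul_sum hN hF h0, Ideal.span_singleton_pow,
    Ideal.mem_span_singleton] at h1
  have hp : Prime r := Polynomial.prime_C_iff.mpr (Polynomial.prime_X_sub_C α)
  refine hp.pow_dvd_of_dvd_mul_left _ ?_ h1
  intro h2
  have h3 := (Polynomial.C_dvd_iff_dvd_coeff _ _).mp (hp.dvd_of_dvd_pow h2) 0
  rw [hw, denForm] at h3
  simp only [Polynomial.coeff_sub, Polynomial.coeff_one_zero, Polynomial.mul_coeff_zero,
    Polynomial.coeff_X_zero, mul_zero, sub_zero] at h3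
  exact Polynomial.not_isUnit_X_sub_C α (isUnit_of_dvd_one h3)

theorem X_pow_sub_one_pow_dvd {n m : ℕ} {ζ : ℂ} (hn : 0 < n) (hζ : IsPrimitiveRoot ζ n)
    {f : Polynomial ℂ} (h : ∀ i < n, (Polynomial.X - Polynomial.C (ζ ^ i)) ^ m ∣ f) :
    (Polynomial.X ^ n - 1) ^ m ∣ f := by
  rw [Polynomial.X_pow_sub_one_eq_prod hn hζ, ← Finset.prod_pow]
  refine Finset.prod_dvd_of_coprime ?_ fun α hα => ?_
  · intro x _ y _ hxy
    exact (Polynomial.pairwise_coprime_X_sub_C Function.injective_id hxy).pow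
  · have : NeZero n := ⟨hn.ne'⟩
    obtain ⟨i, hi, rfl⟩ := hζ.eq_pow_of_pow_eq_one ((Polynomial.mem_nthRootsFinset hn _).mp hα)
    exact h i hi

/-- The configuration of the point `(0 : 0 : 1)` and the points `(1 : α : -α ^ k)` with
`α` running through the powers of `ζ`. -/
noncomputable def rootConfig (n k : ℕ) (ζ : ℂ) : Fin (n + 1) → Fin 3 → ℂ :=
  Fin.cons ![0, 0, 1] fun i : Fin n => ![1, ζ ^ (i : ℕ), -(ζ ^ (i : ℕ)) ^ k]

theorem finrank_le_sum_of_forall_mem {K V W ι : Type*} [Field K] [AddCommGroup V] [Module K V]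
    [AddCommGroup W] [Module K W] [Fintype ι] (f : ι → V →ₗ[K] W) (b : ι → ℕ)
    (hb : ∀ l, ∃ S : Submodule K W, Module.Finite K S ∧ Module.finrank K S ≤ b l ∧
      ∀ x, f l x ∈ S) (hf : ∀ x, (∀ l, f l x = 0) → x = 0) :
    Module.finrank K V ≤ ∑ l, b l := by
  choose S hS hSb hfS using hb
  let Φ : V →ₗ[K] ∀ l, S l := LinearMap.pi fun l => (f l).codRestrict (S l) (hfS l)
  have hΦ : Function.Injective Φ := (injective_iff_map_eq_zero Φ).mpr fun x hx =>
    hf x fun l => congrArg Subtype.val (congrFun hx l)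
  calc _ ≤ Module.finrank K (∀ l, S l) := LinearMap.finrank_le_finrank_of_injective hΦ
    _ = ∑ l, Module.finrank K (S l) := Module.finrank_pi_fintype K
    _ ≤ _ := Finset.sum_le_sum fun l _ => hSb l

theorem exists_submodule_of_dvd_of_natDegree_le {K : Type*} [Field K] {f : Polynomial K}
    (hf : f.Monic) (D : ℕ) : ∃ S : Submodule K (Polynomial K), Module.Finite K S ∧
      Module.finrank K S ≤ D + 1 - f.natDegree ∧ ∀ g, f ∣ g → g.natDegree ≤ D → g ∈ S := by
  have := Module.Finite.equiv (Polynomial.degreeLTEquiv K (D + 1 - f.natDegree)).symm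
  refine ⟨(Polynomial.degreeLT K (D + 1 - f.natDegree)).map (LinearMap.mulLeft K f),
    Module.Finite.map _ _, (Submodule.finrank_map_le _ _).trans_eq ?_, ?_⟩
  · rw [(Polynomial.degreeLTEquiv K _).finrank_eq, Module.finrank_fin_fun]
  · rintro _ ⟨g, rfl⟩ hdeg
    refine ⟨g, ?_, rfl⟩
    rcases eq_or_ne g 0 with rfl | hg0
    · exact zero_mem _
    · rw [hf.natDegree_mul' hg0] at hdeg
      rw [SetLike.mem_coe, Polynomial.mem_degreeLT, ← Polynomial.natDegree_lt_iff_degree_lt hg0]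
      omega

/-- The form `F(w, Y w, z) / w ^ (d - N)` for `z = numForm k` and `w = denForm a`, where `F` is
homogeneous of degree `d` and of degree at most `N` in the last variable. -/
noncomputable def sumForm (a k d N : ℕ) :
    MvPolynomial (Fin 3) ℂ →ₗ[ℂ] Polynomial (Polynomial ℂ) :=
  ∑ j ∈ Finset.range (N + 1), LinearMap.mulRight ℂ (numForm k ^ j * denForm a ^ (N - j)) ∘ₗ
    (Polynomial.CAlgHom (R := ℂ) (A := Polynomial ℂ)).toLinearMap ∘ₗ zCoeff d j

theorem sumForm_apply (a k d N : ℕ) (F : MvPolynomial (Fin 3) ℂ) :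
    sumForm a k d N F = ∑ j ∈ Finset.range (N + 1),
      Polynomial.C (zCoeff d j F) * numForm k ^ j * denForm a ^ (N - j) := by
  simp [sumForm, LinearMap.sum_apply, mul_assoc]

theorem eq_zero_of_sumForm_eq_zero {a k d N : ℕ} (hN : N ≤ d) (hk : 1 ≤ k)
    {F : MvPolynomial (Fin 3) ℂ} (hF : F.IsHomogeneous d)
    (h0 : ∀ ν : Fin 3 →₀ ℕ, N < ν 2 → coeff ν F = 0) (h : sumForm a k d N F = 0) : F = 0 := by
  rw [sumForm_apply] at h
  have hz := eq_zero_of_sum_form_eq_zero a k hk N _ h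
  rw [eq_sum_monomial_expo hN hF h0]
  refine Finset.sum_eq_zero fun j hj => Finset.sum_eq_zero fun i hi => ?_
  have h1 := congrArg (Polynomial.coeff · i) (hz j (Nat.lt_succ_iff.mp (Finset.mem_range.mp hj)))
  simp only [zCoeff_apply, Polynomial.finsetSum_coeff, Polynomial.coeff_monomial,
    Finset.sum_ite_eq', hi, if_true, Polynomial.coeff_zero] at h1
  rw [h1, monomial_zero]

theorem finrank_linSys_rootConfig_le {d n a k s : ℕ} {ζ : ℂ} (hd : 4 ≤ d) (hn : n = a + k)
    (hk : 1 ≤ k) (ha : a ≤ k - 1 + s) (hζ : IsPrimitiveRoot ζ n) :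
    Module.finrank ℂ (linSys (rootConfig n k ζ) d (qh n (d - 4))) ≤
      ∑ l : Fin 5, (d + 4 * (k - 1) + l * s + 1 - 6 * n) := by
  have hn0 : 0 < n := by omega
  have hcoeff {F} (hF : F ∈ linSys (rootConfig n k ζ) d (qh n (d - 4)))
      (ν : Fin 3 →₀ ℕ) (hν : 4 < ν 2) : coeff ν F = 0 := by
    rw [mem_linSys] at hF
    exact coeff_eq_zero_of_multiplicity hF.1 (hF.2 0) ν
      (by simpa only [qh, if_true, Nat.sub_sub_self hd] using hν)
  have hmonic := (Polynomial.monic_X_pow_sub_C (1 : ℂ) hn0.ne').pow 6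
  have hdegree : ((Polynomial.X ^ n - Polynomial.C (1 : ℂ)) ^ 6).natDegree = 6 * n := by
    rw [Polynomial.natDegree_pow, Polynomial.natDegree_X_pow_sub_C]
  refine finrank_le_sum_of_forall_mem
    (fun l : Fin 5 => ((Polynomial.lcoeff (Polynomial ℂ) (l : ℕ)).restrictScalars ℂ ∘ₗ
      sumForm a k d 4).domRestrict (linSys (rootConfig n k ζ) d (qh n (d - 4))))
    (fun l => d + 4 * (k - 1) + l * s + 1 - 6 * n) (fun l => ?_) fun x h => ?_
  · obtain ⟨S, hS, hSb, hmem⟩ :=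
      exists_submodule_of_dvd_of_natDegree_le hmonic (d + 4 * (k - 1) + l * s)
    rw [hdegree] at hSb
    refine ⟨S, hS, hSb, fun x => hmem _ ?_ ?_⟩ <;> obtain ⟨F, hF⟩ := x
    · have hF' := mem_linSys.mp hF
      change _ ∣ (sumForm a k d 4 F).coeff l
      rw [Polynomial.C_1]
      refine X_pow_sub_one_pow_dvd hn0 hζ fun i hi => ?_
      have h1 := pow_dvd_sum_form (m := 6) (a := a) (k := k) hd hF'.1 (hcoeff hF)
        (α := ζ ^ i) (by rw [← hn, pow_right_comm, hζ.pow_eq_one, one_pow])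
        fun ν hν => hF'.2 (Fin.succ ⟨i, hi⟩) ν (by simpa [qh, Fin.succ_ne_zero] using hν)
      rw [← Polynomial.C_pow] at h1
      rw [sumForm_apply]
      exact (Polynomial.C_dvd_iff_dvd_coeff _ _).mp h1 l
    · change ((sumForm a k d 4 F).coeff l).natDegree ≤ _
      rw [sumForm_apply]
      exact slopeLE_sum_form a k hd hk ha _ (fun j => natDegree_zCoeff_le d j F) l
  · obtain ⟨F, hF⟩ := x
    refine Subtype.ext
      (eq_zero_of_sumForm_eq_zero (a := a) hd hk (mem_linSys.mp hF).1 (hcoeff hF) ?_)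
    ext1 l
    rcases Nat.lt_or_ge l 5 with hl | hl
    · exact h ⟨l, hl⟩
    · refine Polynomial.coeff_eq_zero_of_natDegree_lt (lt_of_le_of_lt ?_ hl)
      rw [sumForm_apply]
      exact natDegree_sum_form_le a k 4 _

theorem exists_config_finrank_linSys_le {d n : ℕ} (hn : 1 ≤ n) (hd : 20 * n + 6 ≤ 5 * d)
    (h : Odd n ∨ d ≠ 4 * n + 2) : ∃ p₀ : Fin (n + 1) → Fin 3 → ℂ,
      Module.finrank ℂ (linSys p₀ d (qh n (d - 4))) + 20 * n + 5 ≤ 5 * d := by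
  have hζ := Complex.isPrimitiveRoot_exp n (by omega)
  rcases Nat.even_or_odd' n with ⟨c, hc | hc⟩
  · have h1 := finrank_linSys_rootConfig_le (d := d) (a := c) (k := c) (s := 1) (by omega)
      (by omega) (by omega) (by omega) hζ
    have h2 : d ≠ 4 * n + 2 := h.resolve_left (by simp [hc])
    refine ⟨_, (Nat.add_le_add_right (Nat.add_le_add_right h1 _) _).trans ?_⟩
    simp only [Fin.sum_univ_five, Fin.coe_ofNat_eq_mod]
    omega
  · have h1 := finrank_linSys_rootConfig_le (d := d) (a := c) (k := c + 1) (s := 0) (by omega)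
      (by omega) (by omega) (by omega) hζ
    refine ⟨_, (Nat.add_le_add_right (Nat.add_le_add_right h1 _) _).trans ?_⟩
    simp only [Fin.sum_univ_five, Fin.coe_ofNat_eq_mod]
    omega

theorem virtDim_qh {d n : ℕ} (hd : 4 ≤ d) :
    virtDim d (qh n (d - 4)) = 5 * (d : ℤ) - 21 * n - 6 := by
  obtain ⟨e, rfl⟩ := Nat.exists_eq_add_of_le' hd
  have h1 : ((e + 4 : ℕ) : ℤ) * ((e + 4 : ℕ) + 3) = e * (e + 1) + 2 * (5 * e + 14) := by
    push_cast; ring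
  simp only [virtDim, qh, Fin.sum_univ_succ, if_true, Fin.succ_ne_zero, if_false,
    Nat.add_sub_cancel, Finset.sum_const, Finset.card_univ, Fintype.card_fin, h1,
    Int.add_mul_ediv_left _ _ (two_ne_zero : (2 : ℤ) ≠ 0), nsmul_eq_mul]
  push_cast
  norm_num
  ring

theorem special_L_d_dsub4_sixn (d n : ℕ) (hn : 1 ≤ n) (hd : 20 * n + 6 ≤ 5 * d) :
    virtDim d (qh n (d - 4)) = 5 * (d : ℤ) - 21 * n - 6 ∧
    Generically (n + 1) (fun p =>
      projDim p d (qh n (d - 4)) ≥ 5 * (d : ℤ) - 20 * n - 6 ∧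
      ((Odd n ∨ d ≠ 4 * n + 2) →
        projDim p d (qh n (d - 4)) = 5 * (d : ℤ) - 20 * n - 6) ∧
      projDim p d (qh n (d - 4)) > max (-1) (virtDim d (qh n (d - 4)))) := by
  refine ⟨virtDim_qh (by omega), ?_⟩
  obtain ⟨P, hP0, hP⟩ : ∃ P : MvPolynomial (Fin (n + 1) × Fin 3) ℂ, P ≠ 0 ∧
      ∀ p : Fin (n + 1) → Fin 3 → ℂ, eval (fun x => p x.1 x.2) P ≠ 0 →
        (Odd n ∨ d ≠ 4 * n + 2) →
          Module.finrank ℂ (linSys p d (qh n (d - 4))) + 20 * n + 5 ≤ 5 * d := by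
    by_cases h : Odd n ∨ d ≠ 4 * n + 2
    · obtain ⟨p₀, hp₀⟩ := exists_config_finrank_linSys_le hn hd h
      obtain ⟨P, h0, hP⟩ := exists_eval_ne_zero_forall_finrank_linSys_le p₀ d (qh n (d - 4))
      refine ⟨P, fun h => h0 (by rw [h, map_zero]), fun p hp _ => ?_⟩
      have := hP p hp
      omega
    · exact ⟨1, one_ne_zero, fun _ _ h' => absurd h' h⟩
  refine ⟨P, hP0, fun p hp hne => ?_⟩
  have hlow := le_finrank_linSys (n := n) (d := d) (by omega) p (hp 0)
  have hup := hP p hne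
  rw [virtDim_qh (by omega)]
  unfold projDim
  refine ⟨by omega, fun h => ?_, by omega⟩
  have := hup h
  omega
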